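/- arXiv:2207.05694 — 3 statements merged into one kernel-verified Lean document; each statement's English description precedes it below -/
import Mathlib

section
/- Let d_S ≥ 2 and d_C ≥ 2 be integers, and let ω, ω′ be probability vectors of dimension d_C such that for every pair of probability vectors p, q of dimension d_S one has q⊗ω′ ≺ p⊗ω (i.e., the catalyst pair (ω, ω′) enables every state transformation of a d_S-dimensional system via unital operations). Then (1/2)‖ω − ω′‖₁ ≥ (d_S − 1)/(1 + (d_S − 1)·log₂d_C/log₂d_S). -/
/-- The sum of the `k` largest entries of a vector (equivalently, for vectors with
nonnegative entries, the maximum of `∑ i ∈ s, x i` over subsets `s` of cardinality at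
most `k`; this also accounts for padding with zeros). -/
noncomputable def topSum {ι : Type*} [Fintype ι] [DecidableEq ι] (x : ι → ℝ) (k : ℕ) : ℝ :=
  ((Finset.univ : Finset ι).powerset.filter (fun s => s.card ≤ k)).sup'
    ⟨∅, by simp⟩ (fun s => ∑ i ∈ s, x i)

/-- A probability vector: nonnegative entries summing to 1. -/
def IsProbVec {ι : Type*} [Fintype ι] (x : ι → ℝ) : Prop :=
  (∀ i, 0 ≤ x i) ∧ ∑ i, x i = 1

/-- `x ≺ y` (majorization, after padding with zeros to a common dimension): every partial
sum of the `k` largest entries of `x` is at most that of `y`, with equal total sums. -/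
def PMaj {ι κ : Type*} [Fintype ι] [DecidableEq ι] [Fintype κ] [DecidableEq κ]
    (x : ι → ℝ) (y : κ → ℝ) : Prop :=
  (∀ k : ℕ, topSum x k ≤ topSum y k) ∧ (∑ i, x i = ∑ j, y j)

/-- Tensor product of two vectors: `(x ⊗ y)_{(i,j)} = x_i y_j`. -/
def pvTensor {ι κ : Type*} (x : ι → ℝ) (y : κ → ℝ) : ι × κ → ℝ :=
  fun p => x p.1 * y p.2

/-- The hockey-stick function `λ ↦ ∑ i, (x i - λ)₊` of a vector. -/
noncomputable def excess {ι : Type*} [Fintype ι] (x : ι → ℝ) (t : ℝ) : ℝ :=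
  ∑ i, max (x i - t) 0

/-- Majorization is monotone for the hockey-stick functions at nonnegative thresholds. -/
theorem PMaj.excess_le {ι κ : Type*} [Fintype ι] [DecidableEq ι] [Fintype κ] [DecidableEq κ]
    {x : ι → ℝ} {y : κ → ℝ} (h : PMaj x y) {t : ℝ} (ht : 0 ≤ t) :
    excess x t ≤ excess y t := by
  set s : Finset ι := Finset.univ.filter (fun i => t < x i) with hs
  have hx : excess x t = ∑ i ∈ s, x i - s.card * t := by
    rw [excess, hs, Finset.sum_filter, Finset.card_filter, Nat.cast_sum, Finset.sum_mul,
      ← Finset.sum_sub_distrib]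
    refine Finset.sum_congr rfl fun i _ => ?_
    split_ifs with hi
    · rw [max_eq_left (by linarith)]; simp
    · rw [max_eq_right (by linarith)]; simp
  have hle : ∑ i ∈ s, x i ≤ topSum x s.card :=
    Finset.le_sup' (fun s : Finset ι => ∑ i ∈ s, x i) (by simp)
  have hy : topSum y s.card ≤ excess y t + s.card * t := by
    refine Finset.sup'_le _ _ fun u hu => ?_
    have hcard : (u.card : ℝ) ≤ s.card := by
      exact_mod_cast (Finset.mem_filter.1 hu).2
    have hsub : ∑ i ∈ u, (y i - t) ≤ excess y t :=
      (Finset.sum_le_sum fun i _ => le_max_left _ _).trans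
        (Finset.sum_le_sum_of_subset_of_nonneg (Finset.subset_univ u)
          fun i _ _ => le_max_right _ _)
    rw [Finset.sum_sub_distrib, Finset.sum_const, nsmul_eq_mul] at hsub
    nlinarith
  linarith [h.1 s.card]

/-- A catalyst pair taking the maximally mixed state to a pure one has comparable
hockey-stick functions. -/
theorem excess_le_excess_mul {d n : ℕ} (hd : 0 < d) {ω ω' : Fin n → ℝ}
    (h : ∀ p q : Fin d → ℝ, IsProbVec p → IsProbVec q →
      PMaj (pvTensor q ω') (pvTensor p ω)) {t : ℝ} (ht : 0 ≤ t) :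
    excess ω' t ≤ excess ω (d * t) := by
  have hd' : (0 : ℝ) < d := by exact_mod_cast hd
  have key := (h (fun _ => (d : ℝ)⁻¹) (Pi.single ⟨0, hd⟩ 1)
    ⟨fun _ => by positivity, by simp [hd'.ne']⟩
    ⟨fun i => by
      rw [Pi.single_apply]
      split_ifs <;> norm_num, by simp⟩).excess_le ht
  unfold excess pvTensor at key
  rw [Fintype.sum_prod_type, Fintype.sum_prod_type] at key
  have hl := Finset.single_le_sum
    (f := fun i => ∑ j, max ((Pi.single ⟨0, hd⟩ 1 : Fin d → ℝ) i * ω' j - t) 0)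
    (fun i _ => Finset.sum_nonneg fun j _ => le_max_right _ _)
    (Finset.mem_univ (⟨0, hd⟩ : Fin d))
  simp only [Pi.single_eq_same, one_mul] at hl
  refine (hl.trans key).trans_eq ?_
  dsimp only
  rw [Finset.sum_const, Finset.card_univ, Fintype.card_fin, nsmul_eq_mul, Finset.mul_sum]
  refine Finset.sum_congr rfl fun j _ => ?_
  rw [mul_max_of_nonneg _ _ hd'.le, mul_zero, mul_sub, mul_inv_cancel_left₀ hd'.ne']

/-- The trace distance bounds the change of the hockey-stick function. -/
theorem excess_le_add_half_dist {ι : Type*} [Fintype ι] {x y : ι → ℝ}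
    (hxy : ∑ i, x i = ∑ i, y i) (t : ℝ) :
    excess x t ≤ excess y t + (1 / 2) * ∑ i, |x i - y i| := by
  have hpos : (1 / 2) * ∑ i, |x i - y i| = ∑ i, (|x i - y i| + (x i - y i)) / 2 := by
    rw [← Finset.sum_div, Finset.sum_add_distrib, Finset.sum_sub_distrib, hxy]
    ring
  rw [hpos, excess, excess, ← Finset.sum_add_distrib]
  refine Finset.sum_le_sum fun i _ => max_le ?_ ?_
  · linarith [le_max_left (y i - t) 0, le_abs_self (x i - y i)]
  · linarith [le_max_right (y i - t) 0, neg_abs_le (x i - y i)]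

theorem IsProbVec.one_sub_le_excess {n : ℕ} {x : Fin n → ℝ} (hx : IsProbVec x) (t : ℝ) :
    1 - n * t ≤ excess x t := by
  have := Finset.sum_le_sum fun (i : Fin n) (_ : i ∈ Finset.univ) =>
    le_max_left (x i - t) 0
  rw [Finset.sum_sub_distrib, hx.2] at this
  simpa [excess] using this

/-- Bernoulli's inequality between consecutive powers of `d`. -/
theorem div_pow_log_le {d n : ℕ} (hd : 2 ≤ d) (hn : n ≠ 0) :
    (n : ℝ) / d ^ Nat.log d n ≤ 1 + (d - 1) * (Real.logb d n - Nat.log d n) := by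
  have hd1 : (1 : ℝ) < d := by exact_mod_cast hd
  have hd0 : (0 : ℝ) < d := by linarith
  have hn0 : (0 : ℝ) < n := by exact_mod_cast Nat.pos_of_ne_zero hn
  have hlow : (Nat.log d n : ℝ) ≤ Real.logb d n := by
    rw [Real.le_logb_iff_rpow_le hd1 hn0, Real.rpow_natCast]
    exact_mod_cast Nat.pow_log_le_self d hn
  have hupp : Real.logb d n ≤ Nat.log d n + 1 := by
    rw [Real.logb_le_iff_le_rpow hd1 hn0, ← Nat.cast_add_one, Real.rpow_natCast]
    exact_mod_cast (Nat.lt_pow_succ_log_self (by omega) n).le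
  have hb := rpow_one_add_le_one_add_mul_self (s := (d : ℝ) - 1) (by linarith)
    (sub_nonneg.2 hlow) (by linarith)
  rwa [add_sub_cancel, Real.rpow_sub hd0, Real.rpow_logb hd0 hd1.ne' hn0,
    Real.rpow_natCast, mul_comm (_ - _)] at hb

/-- Ng–Mančinska–Cirstoiu–Eisert–Wehner lower bound on the minimal change of an
embezzling catalyst in the resource theory of purity: if the catalyst pair `(ω, ω')`
enables every state transformation of a `d_S`-dimensional system via unital operations
(i.e. `q ⊗ ω' ≺ p ⊗ ω` for all probability vectors `p, q`), then the trace distance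
between `ω` and `ω'` is bounded below. -/
theorem embezzling_catalyst_change_bound {dS dC : ℕ} (hS : 2 ≤ dS) (hC : 2 ≤ dC)
    (ω ω' : Fin dC → ℝ) (hω : IsProbVec ω) (hω' : IsProbVec ω')
    (h : ∀ p q : Fin dS → ℝ, IsProbVec p → IsProbVec q →
      PMaj (pvTensor q ω') (pvTensor p ω)) :
    ((dS : ℝ) - 1) / (1 + ((dS : ℝ) - 1) * Real.logb 2 dC / Real.logb 2 dS) ≤
      (1 / 2) * ∑ i, |ω i - ω' i| := by
  set ε : ℝ := (1 / 2) * ∑ i, |ω i - ω' i| with hε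
  have hd1 : (1 : ℝ) < dS := by exact_mod_cast hS
  have hd0 : (0 : ℝ) < dS := by linarith
  have hn1 : (1 : ℝ) < dC := by exact_mod_cast hC
  have hmaj : ∀ t : ℝ, 0 ≤ t → excess ω' t ≤ excess ω (dS * t) :=
    fun t ht => excess_le_excess_mul (by omega) h ht
  have hstep : ∀ t : ℝ, 0 ≤ t → excess ω (t / dS) ≤ excess ω t + ε := fun t ht => by
    have h₁ := excess_le_add_half_dist (hω.2.trans hω'.2.symm) (t / dS)
    have h₂ := hmaj (t / dS) (by positivity)
    rw [mul_div_cancel₀ _ hd0.ne'] at h₂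
    linarith
  have : Nonempty (Fin dC) := ⟨⟨0, by omega⟩⟩
  obtain ⟨i₀, hi₀⟩ := Finite.exists_max ω
  have hM : 0 ≤ ω i₀ := hω.1 i₀
  have hzero : excess ω (ω i₀) = 0 :=
    Finset.sum_eq_zero fun i _ => max_eq_right (sub_nonpos.2 (hi₀ i))
  have hiter : ∀ j : ℕ, excess ω (ω i₀ / dS ^ j) ≤ j * ε := fun j => by
    induction j with
    | zero => simp [hzero]
    | succ j ih =>
      have := hstep (ω i₀ / dS ^ j) (by positivity)
      rw [div_div, ← pow_succ] at this
      push_cast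
      linarith
  have hmax : ω i₀ * (dS - 1) ≤ dS * ε := by
    have h₁ := hiter 1
    have h₂ : ω i₀ - ω i₀ / dS ≤ excess ω (ω i₀ / dS) :=
      (le_max_left _ 0).trans (Finset.single_le_sum
        (f := fun i => max (ω i - ω i₀ / dS) 0) (fun i _ => le_max_right _ _)
        (Finset.mem_univ i₀))
    rw [pow_one, Nat.cast_one, one_mul] at h₁
    have h₃ := mul_le_mul_of_nonneg_left (h₂.trans h₁) hd0.le
    rw [mul_sub, mul_div_cancel₀ _ hd0.ne'] at h₃
    linarith
  set r := Nat.log dS dC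
  have hone : 1 ≤ dC / dS ^ r * (ω i₀ / dS) + r * ε := by
    have h₁ := hω'.one_sub_le_excess (ω i₀ / dS ^ r / dS)
    have h₂ := hmaj (ω i₀ / dS ^ r / dS) (by positivity)
    rw [mul_div_cancel₀ _ hd0.ne'] at h₂
    have h₃ : (dC : ℝ) / dS ^ r * (ω i₀ / dS) = dC * (ω i₀ / dS ^ r / dS) := by
      field_simp
    linarith [hiter r]
  have hbern := div_pow_log_le hS (n := dC) (by omega)
  have hL : Real.logb 2 dC / Real.logb 2 dS = Real.logb dS dC := by
    rw [Real.logb, Real.logb, Real.logb, div_div_div_cancel_right₀ (by positivity)]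
  have hL0 : 0 < Real.logb dS dC := Real.logb_pos hd1 hn1
  have hε0 : 0 ≤ ε := by positivity
  have hscaled : ω i₀ / dS * (dS - 1) ≤ ε := by
    rw [div_mul_eq_mul_div, div_le_iff₀ hd0]
    linarith
  rw [mul_div_assoc, hL, div_le_iff₀ (by nlinarith)]
  have hfrac : (0 : ℝ) ≤ dC / dS ^ r := by positivity
  have h₁ := mul_le_mul_of_nonneg_left hscaled hfrac
  have h₂ := mul_le_mul_of_nonneg_right hbern hε0
  have h₃ := mul_le_mul_of_nonneg_right hone (sub_nonneg.2 hd1.le)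
  linarith
end

section
/- For every integer d ≥ 2 the following hold: (a) for all d×d complex density matrices ρ and σ whose eigenvalue vectors satisfy λ(σ) ≺ λ(ρ), there exist d unitary d×d matrices U_1,…,U_d such that σ = (1/d)Σ_{i=1}^d U_i ρ U_i†; (b) for every integer m < d there exist d×d density matrices ρ and σ with λ(σ) ≺ λ(ρ) such that no m unitary matrices U_1,…,U_m satisfy σ = (1/m)Σ_{i=1}^m U_i ρ U_i†. Hence the minimal amount of classical randomness m*_C(d) needed to implement all majorization-allowed state transitions in dimension d equals d. -/
open scoped ComplexOrder

open Matrix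

/-- A quadratic form in the plane takes on the unit circle every value between its values at the
two coordinate vectors. -/
lemma exists_rotation_quadratic_eq {a b t : ℝ} (h : ℝ) (ht : t ∈ Set.Icc b a) :
    ∃ c s : ℝ, c ^ 2 + s ^ 2 = 1 ∧ c ^ 2 * a + c * s * h + s ^ 2 * b = t := by
  have hcont : ContinuousOn (fun θ : ℝ => Real.cos θ ^ 2 * a + Real.cos θ * Real.sin θ * h
      + Real.sin θ ^ 2 * b) (Set.Icc 0 (Real.pi / 2)) := by fun_prop
  obtain ⟨θ, -, hθ⟩ := intermediate_value_Icc' Real.pi_div_two_pos.le hcont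
    (by simpa using ht)
  exact ⟨Real.cos θ, Real.sin θ, Real.cos_sq_add_sin_sq θ, hθ⟩

section Diagonal

variable {n : Type*} [Fintype n]

lemma mul_mul_conjTranspose_apply (W A : Matrix n n ℂ) (i j : n) :
    (W * A * Wᴴ) i j = W i ⬝ᵥ (A *ᵥ star (W j)) := by
  rw [Matrix.mul_assoc, Matrix.mul_apply]
  simp only [dotProduct, mulVec, Matrix.mul_apply, conjTranspose_apply, Pi.star_apply]

lemma dotProduct_mulVec_star_swap {A : Matrix n n ℂ} (hA : A.IsHermitian) (u v : n → ℂ) :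
    v ⬝ᵥ (A *ᵥ star u) = star (u ⬝ᵥ (A *ᵥ star v)) := by
  rw [← star_dotProduct_star, star_mulVec, star_star, hA.eq, ← dotProduct_mulVec]

variable [DecidableEq n]

/-- Some orthonormal basis, given as a family of rows, has the values `x` under the sesquilinear
form of `A`; equivalently, `x` is the diagonal of a unitary conjugate of `A`. -/
def HasUnitaryDiag (A : Matrix n n ℂ) (x : n → ℝ) : Prop :=
  ∃ w : n → n → ℂ, (∀ i j, w i ⬝ᵥ star (w j) = if i = j then 1 else 0) ∧
    ∀ i, w i ⬝ᵥ (A *ᵥ star (w i)) = (x i : ℂ)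

lemma hasUnitaryDiag_iff {A : Matrix n n ℂ} {x : n → ℝ} :
    HasUnitaryDiag A x ↔ ∃ W ∈ unitaryGroup n ℂ, ∀ i, (W * A * Wᴴ) i i = (x i : ℂ) := by
  have hunit : ∀ W : Matrix n n ℂ, W ∈ unitaryGroup n ℂ ↔
      ∀ i j, W i ⬝ᵥ star (W j) = if i = j then 1 else 0 := fun W => by
    simp only [mem_unitaryGroup_iff, ← Matrix.ext_iff, star_eq_conjTranspose, Matrix.mul_apply,
      Matrix.one_apply, conjTranspose_apply, dotProduct, Pi.star_apply]
  simp only [mul_mul_conjTranspose_apply, hunit]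
  exact Iff.rfl

lemma HasUnitaryDiag.comp_perm {A : Matrix n n ℂ} {x : n → ℝ} (hx : HasUnitaryDiag A x)
    (π : Equiv.Perm n) : HasUnitaryDiag A (x ∘ π) := by
  obtain ⟨w, hw, hd⟩ := hx
  exact ⟨fun i => w (π i), fun i j => by simp [hw], fun i => hd (π i)⟩

/-- Diagonals of unitary conjugates are closed under moving two entries towards each other. -/
lemma HasUnitaryDiag.transfer {A : Matrix n n ℂ} (hA : A.IsHermitian) {x : n → ℝ}
    (hx : HasUnitaryDiag A x) {i j : n} (hij : i ≠ j) {δ : ℝ} (h0 : 0 ≤ δ)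
    (hδ : δ ≤ x i - x j) :
    HasUnitaryDiag A (fun k => x k - (if k = i then δ else 0) + (if k = j then δ else 0)) := by
  obtain ⟨w, hw, hd⟩ := hx
  obtain ⟨c, s, hcs, hq⟩ := exists_rotation_quadratic_eq (a := x i) (b := x j) (t := x i - δ)
    (2 * (w i ⬝ᵥ (A *ᵥ star (w j))).re) ⟨by linarith, by linarith⟩
  have hre : ((2 * (w i ⬝ᵥ (A *ᵥ star (w j))).re : ℝ) : ℂ)
      = w i ⬝ᵥ (A *ᵥ star (w j)) + w j ⬝ᵥ (A *ᵥ star (w i)) := by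
    rw [dotProduct_mulVec_star_swap hA (w i) (w j), ← Complex.add_conj]; rfl
  have hcs' : (c : ℂ) ^ 2 + (s : ℂ) ^ 2 = 1 := by exact_mod_cast hcs
  have hq' : (c : ℂ) ^ 2 * x i + c * s * ((2 * (w i ⬝ᵥ (A *ᵥ star (w j))).re : ℝ) : ℂ)
      + (s : ℂ) ^ 2 * x j = x i - δ := by exact_mod_cast congrArg ((↑) : ℝ → ℂ) hq
  rw [hre] at hq'
  refine ⟨fun k => if k = j then -(s : ℂ) • w i + (c : ℂ) • w j
    else if k = i then (c : ℂ) • w i + (s : ℂ) • w j else w k, fun k l => ?_, fun k => ?_⟩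
  · have hji := hij.symm
    by_cases hkj : k = j <;> by_cases hlj : l = j <;> by_cases hki : k = i <;>
      by_cases hli : l = i <;> subst_vars <;>
      first
      | contradiction
      | simp [*, Ne.symm] <;> first | linear_combination hcs' | ring1
  · by_cases hkj : k = j
    · subst hkj
      simp [mulVec_add, mulVec_smul, mulVec_neg, hd, hij.symm]
      linear_combination (x i + x k : ℂ) * hcs' - hq'
    · by_cases hki : k = i
      · subst hki
        simp [mulVec_add, mulVec_smul, hd, hkj]
        linear_combination hq'
      · simp [hkj, hki, hd]

end Diagonal

section Majorization

lemma sum_le_topSum {ι : Type*} [Fintype ι] [DecidableEq ι] (x : ι → ℝ) {s : Finset ι} {k : ℕ}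
    (hs : s.card ≤ k) : ∑ i ∈ s, x i ≤ topSum x k :=
  Finset.le_sup' (fun s => ∑ i ∈ s, x i) (by simpa using hs)

lemma topSum_le_iff {ι : Type*} [Fintype ι] [DecidableEq ι] {x : ι → ℝ} {k : ℕ} {c : ℝ} :
    topSum x k ≤ c ↔ ∀ s : Finset ι, s.card ≤ k → ∑ i ∈ s, x i ≤ c := by
  simp [topSum, Finset.sup'_le_iff]

variable {d : ℕ}

lemma sum_le_sum_Iic_of_antitone {f : Fin d → ℝ} (hf : Antitone f) (h0 : ∀ i, 0 ≤ f i)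
    (k : Fin d) {s : Finset (Fin d)} (hs : s.card ≤ (k : ℕ) + 1) :
    ∑ i ∈ s, f i ≤ ∑ i ∈ Finset.Iic k, f i := by
  have hshift : ∑ i ∈ s, (f i - f k) ≤ ∑ i ∈ Finset.Iic k, (f i - f k) := by
    calc ∑ i ∈ s, (f i - f k) ≤ ∑ i ∈ s ∩ Finset.Iic k, (f i - f k) := by
          rw [← Finset.sum_inter_add_sum_sdiff s (Finset.Iic k)]
          have : ∑ i ∈ s \ Finset.Iic k, (f i - f k) ≤ 0 :=
            Finset.sum_nonpos fun i hi => sub_nonpos.2 (hf (by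
              simp only [Finset.mem_sdiff, Finset.mem_Iic, not_le] at hi
              exact hi.2.le))
          linarith
      _ ≤ _ := Finset.sum_le_sum_of_subset_of_nonneg Finset.inter_subset_right
          fun i hi _ => sub_nonneg.2 (hf (Finset.mem_Iic.1 hi))
  simp only [Finset.sum_sub_distrib, Finset.sum_const, Fin.card_Iic, nsmul_eq_mul] at hshift
  have hcard : (s.card : ℝ) ≤ ((k + 1 : ℕ) : ℝ) := by exact_mod_cast hs
  nlinarith [mul_le_mul_of_nonneg_right hcard (h0 k)]

lemma exists_antitone_comp_perm (x : Fin d → ℝ) : ∃ π : Equiv.Perm (Fin d), Antitone (x ∘ π) :=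
  ⟨Tuple.sort (fun i => -x i), fun _ _ hij =>
    neg_le_neg_iff.1 (Tuple.monotone_sort (fun i => -x i) hij)⟩

lemma PMaj.sum_Iic_le {x y : Fin d → ℝ} (h : PMaj x y) (hy : ∀ i, 0 ≤ y i)
    {π : Equiv.Perm (Fin d)} (hπ : Antitone (y ∘ π)) (τ : Equiv.Perm (Fin d)) (k : Fin d) :
    ∑ i ∈ Finset.Iic k, x (τ i) ≤ ∑ i ∈ Finset.Iic k, y (π i) := by
  calc ∑ i ∈ Finset.Iic k, x (τ i) = ∑ i ∈ (Finset.Iic k).map τ.toEmbedding, x i := by simp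
    _ ≤ topSum x (k + 1) := sum_le_topSum x (by simp)
    _ ≤ topSum y (k + 1) := h.1 _
    _ ≤ _ := topSum_le_iff.2 fun s hs => by
      have := sum_le_sum_Iic_of_antitone hπ (fun i => hy _) k
        (s := s.map π.symm.toEmbedding) (by simpa using hs)
      simpa using this

/-- Dominance of partial sums over an antitone target makes the target a diagonal. -/
lemma HasUnitaryDiag.of_sum_Iic_le {A : Matrix (Fin d) (Fin d) ℂ} (hA : A.IsHermitian)
    {x y : Fin d → ℝ} (hx : Antitone x) (hy : HasUnitaryDiag A y)
    (hle : ∀ k, ∑ i ∈ Finset.Iic k, x i ≤ ∑ i ∈ Finset.Iic k, y i)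
    (hsum : ∑ i, x i = ∑ i, y i) : HasUnitaryDiag A x := by
  induction hN : (Finset.univ.filter fun i => x i ≠ y i).card using Nat.strong_induction_on
    generalizing y with
  | _ N ih =>
  by_cases hex : ∃ k, y k < x k
  swap
  · push Not at hex
    have hxy : x = y := funext fun i =>
      (Finset.sum_eq_sum_iff_of_le fun i _ => hex i).1 hsum i (Finset.mem_univ i)
    exact hxy ▸ hy
  obtain ⟨k, hk, hmin⟩ := WellFounded.has_min (wellFounded_lt (α := Fin d)) {k | y k < x k} hex
  have hbelow : ∀ i, i < k → x i ≤ y i := fun i hi => not_lt.1 fun h => hmin i h hi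
  obtain ⟨j, hjk, hj⟩ : ∃ j < k, x j < y j := by
    by_contra! hno
    refine (hle k).not_gt (Finset.sum_lt_sum (fun i hi => ?_) ⟨k, by simp, hk⟩)
    rcases (Finset.mem_Iic.1 hi).lt_or_eq with h | rfl
    exacts [hno i h, hk.le]
  have hk' : y k < x k := hk
  set δ := min (y j - x j) (x k - y k) with hδ
  have hδj : δ ≤ y j - x j := min_le_left _ _
  have hδk : δ ≤ x k - y k := min_le_right _ _
  have hδ0 : 0 < δ := lt_min (by linarith) (by linarith)
  have hxjk := hx hjk.le
  refine ih _ ?_ (hy.transfer hA hjk.ne hδ0.le (by linarith)) (fun l => ?_) ?_ rfl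
  · rw [← hN]
    refine Finset.card_lt_card (Finset.ssubset_iff_subset_ne.2 ⟨fun i hi => ?_, fun heq => ?_⟩)
    · by_cases hij : i = j
      · subst hij; simp [hj.ne]
      by_cases hik : i = k
      · subst hik; simp [hk'.ne']
      simpa [hij, hik] using hi
    · rcases min_choice (y j - x j) (x k - y k) with h | h
      · have : j ∈ Finset.univ.filter fun i => x i ≠ y i := by simp [hj.ne]
        rw [← heq] at this
        simp [hjk.ne, hδ, h] at this
      · have : k ∈ Finset.univ.filter fun i => x i ≠ y i := by simp [hk'.ne']
        rw [← heq] at this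
        simp [hjk.ne', hδ, h] at this
  · simp only [Finset.sum_add_distrib, Finset.sum_sub_distrib, Finset.sum_ite_eq',
      Finset.mem_Iic]
    have hl := hle l
    by_cases hjl : j ≤ l <;> by_cases hkl : k ≤ l
    · simp [hjl, hkl, hl]
    · simp only [hjl, hkl, if_true, if_false]
      have := Finset.single_le_sum (f := fun i => y i - x i) (s := Finset.Iic l)
        (fun i hi => sub_nonneg.2 (hbelow i ((Finset.mem_Iic.1 hi).trans_lt (not_le.1 hkl))))
        (Finset.mem_Iic.2 hjl)
      simp only [Finset.sum_sub_distrib] at this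
      linarith
    · exact absurd (hjk.le.trans hkl) hjl
    · simp [hjl, hkl, hl]
  · simp [Finset.sum_add_distrib, hsum]

lemma HasUnitaryDiag.of_pmaj {A : Matrix (Fin d) (Fin d) ℂ} (hA : A.IsHermitian)
    {x y : Fin d → ℝ} (hy : HasUnitaryDiag A y) (hy0 : ∀ i, 0 ≤ y i) (h : PMaj x y) :
    HasUnitaryDiag A x := by
  obtain ⟨π, hπ⟩ := exists_antitone_comp_perm y
  obtain ⟨τ, hτ⟩ := exists_antitone_comp_perm x
  have hxτ : HasUnitaryDiag A (x ∘ τ) :=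
    (hy.comp_perm π).of_sum_Iic_le hA hτ (h.sum_Iic_le hy0 hπ τ)
      (by simpa [Equiv.sum_comp] using h.2)
  simpa [Function.comp_assoc] using hxτ.comp_perm τ.symm

end Majorization

lemma Matrix.IsHermitian.hasUnitaryDiag_eigenvalues {n : Type*} [Fintype n] [DecidableEq n]
    {A : Matrix n n ℂ} (hA : A.IsHermitian) : HasUnitaryDiag A hA.eigenvalues := by
  refine hasUnitaryDiag_iff.2
    ⟨star (hA.eigenvectorUnitary : Matrix n n ℂ), (star hA.eigenvectorUnitary).2, fun i => ?_⟩
  have h := hA.conjStarAlgAut_star_eigenvectorUnitary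
  rw [Unitary.conjStarAlgAut_star_apply] at h
  rw [star_eq_conjTranspose] at h ⊢
  rw [conjTranspose_conjTranspose, h]
  simp

section Dephasing

variable {d : ℕ}

/-- The diagonal phase matrix with entries `ζ ^ (i * k)` for a primitive `d`-th root `ζ`. -/
noncomputable def phaseMatrix (d k : ℕ) : Matrix (Fin d) (Fin d) ℂ :=
  diagonal fun i => Complex.exp (2 * Real.pi * Complex.I / d) ^ ((i : ℕ) * k)

lemma rootOfUnity_mul_star (d : ℕ) :
    Complex.exp (2 * Real.pi * Complex.I / d) * star (Complex.exp (2 * Real.pi * Complex.I / d))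
      = 1 := by
  rw [Complex.star_def, ← Complex.exp_conj, ← Complex.exp_add]
  simp [neg_div, Complex.conj_ofNat]

lemma phaseMatrix_mem_unitaryGroup (d k : ℕ) : phaseMatrix d k ∈ unitaryGroup (Fin d) ℂ := by
  rw [mem_unitaryGroup_iff, star_eq_conjTranspose, phaseMatrix, diagonal_conjTranspose,
    diagonal_mul_diagonal, ← diagonal_one]
  congr 1
  funext i
  rw [Pi.star_apply, star_pow, ← mul_pow, rootOfUnity_mul_star, one_pow]

/-- Averaging over conjugation with all phase matrices removes the off-diagonal entries. -/
lemma sum_phaseMatrix_conj (hd : d ≠ 0) (A : Matrix (Fin d) (Fin d) ℂ) :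
    (d : ℂ)⁻¹ • ∑ k : Fin d, phaseMatrix d k * A * (phaseMatrix d k)ᴴ
      = diagonal fun i => A i i := by
  have hζ := Complex.isPrimitiveRoot_exp d hd
  have hunit := rootOfUnity_mul_star d
  ext i j
  simp only [phaseMatrix, diagonal_conjTranspose, Matrix.smul_apply, Matrix.sum_apply, mul_diagonal,
    diagonal_mul, Pi.star_apply, star_pow, smul_eq_mul]
  set ζ := Complex.exp (2 * Real.pi * Complex.I / d) with hζdef
  have hterm : ∀ k : Fin d, ζ ^ ((i : ℕ) * k) * A i j * star ζ ^ ((j : ℕ) * k)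
      = A i j * (ζ ^ (i : ℕ) * star ζ ^ (j : ℕ)) ^ (k : ℕ) := fun k => by
    rw [mul_pow, ← pow_mul, ← pow_mul]; ring
  rw [Finset.sum_congr rfl fun k _ => hterm k, ← Finset.mul_sum,
    Fin.sum_univ_eq_sum_range fun k => (ζ ^ (i : ℕ) * star ζ ^ (j : ℕ)) ^ k]
  by_cases hij : i = j
  · subst hij
    rw [← mul_pow, hunit]
    have : (d : ℂ) ≠ 0 := by exact_mod_cast hd
    simp
    field_simp
  · have hne : ζ ^ (i : ℕ) * star ζ ^ (j : ℕ) ≠ 1 := fun h => hij <| Fin.ext <| by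
      refine hζ.pow_inj i.2 j.2 ?_
      calc ζ ^ (i : ℕ) = ζ ^ (i : ℕ) * star ζ ^ (j : ℕ) * ζ ^ (j : ℕ) := by
            rw [mul_assoc, ← mul_pow, mul_comm (star ζ), hunit, one_pow, mul_one]
        _ = ζ ^ (j : ℕ) := by rw [h, one_mul]
    have hpow : (ζ ^ (i : ℕ) * star ζ ^ (j : ℕ)) ^ d = 1 := by
      rw [mul_pow, ← pow_mul, ← pow_mul, mul_comm (i : ℕ), mul_comm (j : ℕ), pow_mul, pow_mul,
        ← star_pow, hζ.pow_eq_one]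
      simp
    rw [geom_sum_eq hne, hpow]
    simp [hij]

end Dephasing

lemma exists_uniform_unitary_mixture_of_pmaj {d : ℕ} (hd : d ≠ 0)
    {ρ σ : Matrix (Fin d) (Fin d) ℂ} (hρ : ρ.PosSemidef) (hσ : σ.IsHermitian)
    (h : PMaj hσ.eigenvalues hρ.isHermitian.eigenvalues) :
    ∃ U : Fin d → Matrix (Fin d) (Fin d) ℂ,
      (∀ i, U i ∈ unitaryGroup (Fin d) ℂ) ∧ σ = (d : ℂ)⁻¹ • ∑ i, U i * ρ * (U i)ᴴ := by
  obtain ⟨W, hW, hdiag⟩ := hasUnitaryDiag_iff.1 <|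
    hρ.isHermitian.hasUnitaryDiag_eigenvalues.of_pmaj hρ.isHermitian hρ.eigenvalues_nonneg h
  let V : Matrix (Fin d) (Fin d) ℂ := (hσ.eigenvectorUnitary).1
  refine ⟨fun k => V * phaseMatrix d k * W, fun k => mul_mem (mul_mem
    hσ.eigenvectorUnitary.2 (phaseMatrix_mem_unitaryGroup d k)) hW, ?_⟩
  have hconj : ∀ k : Fin d, V * phaseMatrix d k * W * ρ * (V * phaseMatrix d k * W)ᴴ
      = V * (phaseMatrix d k * (W * ρ * Wᴴ) * (phaseMatrix d k)ᴴ) * Vᴴ := fun k => by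
    simp only [conjTranspose_mul, Matrix.mul_assoc]
  rw [Finset.sum_congr rfl fun k _ => hconj k, ← Finset.sum_mul, ← Finset.mul_sum,
    ← Matrix.smul_mul, ← Matrix.mul_smul, sum_phaseMatrix_conj hd]
  simp only [hdiag]
  exact hσ.spectral_theorem

section LowerBound

variable {d : ℕ}

lemma pmaj_of_isProbVec_of_apply_eq_one {ι κ : Type*} [Fintype ι] [DecidableEq ι] [Fintype κ]
    [DecidableEq κ] {x : ι → ℝ} {y : κ → ℝ} (hx : IsProbVec x) (hy : IsProbVec y) {j : κ}
    (hj : y j = 1) : PMaj x y := by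
  refine ⟨fun k => topSum_le_iff.2 fun s hs => ?_, hx.2.trans hy.2.symm⟩
  rcases Nat.eq_zero_or_pos k with rfl | hk
  · obtain rfl : s = ∅ := by simpa using hs
    simpa using sum_le_topSum y (s := ∅) (k := 0) (by simp)
  · calc ∑ i ∈ s, x i ≤ ∑ i, x i :=
          Finset.sum_le_sum_of_subset_of_nonneg (Finset.subset_univ s) fun i _ _ => hx.1 i
      _ = ∑ i ∈ {j}, y i := by simp [hx.2, hj]
      _ ≤ topSum y k := sum_le_topSum y (by simpa using Nat.succ_le_of_lt hk)

lemma Matrix.PosSemidef.isProbVec_eigenvalues {n : Type*} [Fintype n] [DecidableEq n]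
    {A : Matrix n n ℂ} (hA : A.PosSemidef) (htr : A.trace = 1) :
    IsProbVec hA.isHermitian.eigenvalues := by
  refine ⟨hA.eigenvalues_nonneg, ?_⟩
  have h := hA.isHermitian.trace_eq_sum_eigenvalues
  rw [htr, ← RCLike.ofReal_sum] at h
  exact Complex.ofReal_injective (by simpa using h.symm)

/-- A sum of `m` conjugates of a rank-one projection onto a coordinate has rank at most `m`. -/
lemma rank_smul_sum_conj_single_le {m : ℕ} (c : ℂ) (i : Fin d)
    (U : Fin m → Matrix (Fin d) (Fin d) ℂ) :
    (c • ∑ k, U k * diagonal (Pi.single i 1) * (U k)ᴴ).rank ≤ m := by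
  have hfac : c • ∑ k, U k * diagonal (Pi.single i 1) * (U k)ᴴ
      = (c • Matrix.of fun a k => U k a i) * (Matrix.of fun a k => U k a i)ᴴ := by
    ext a b
    simp [Matrix.mul_apply, Matrix.sum_apply, diagonal, Pi.single_apply, Finset.mul_sum, mul_assoc]
  rw [hfac]
  exact (rank_mul_le_left _ _).trans (rank_le_width _)

end LowerBound

/-- Boes–Eisert–Gallego–Müller–Wilming: the minimal amount of classical randomness needed
to implement all majorization-allowed state transitions in dimension `d` equals `d`:
(a) `d` unitaries always suffice; (b) for every `m < d` there is a majorization-allowed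
transition that cannot be implemented as a uniform mixture of `m` unitary conjugations. -/
theorem classical_randomness_cost (d : ℕ) (hd : 2 ≤ d) :
    (∀ (ρ σ : Matrix (Fin d) (Fin d) ℂ) (hρ : ρ.PosSemidef) (hσ : σ.PosSemidef),
        ρ.trace = 1 → σ.trace = 1 →
        PMaj hσ.isHermitian.eigenvalues hρ.isHermitian.eigenvalues →
        ∃ U : Fin d → Matrix (Fin d) (Fin d) ℂ,
          (∀ i, U i ∈ Matrix.unitaryGroup (Fin d) ℂ) ∧
          σ = ((d : ℂ))⁻¹ • ∑ i, U i * ρ * (U i).conjTranspose) ∧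
    (∀ m : ℕ, m < d →
      ∃ (ρ σ : Matrix (Fin d) (Fin d) ℂ) (hρ : ρ.PosSemidef) (hσ : σ.PosSemidef),
        ρ.trace = 1 ∧ σ.trace = 1 ∧
        PMaj hσ.isHermitian.eigenvalues hρ.isHermitian.eigenvalues ∧
        ¬ ∃ U : Fin m → Matrix (Fin d) (Fin d) ℂ,
          (∀ i, U i ∈ Matrix.unitaryGroup (Fin d) ℂ) ∧
          σ = ((m : ℂ))⁻¹ • ∑ i, U i * ρ * (U i).conjTranspose) := by
  have hd0 : d ≠ 0 := by omega
  refine ⟨fun ρ σ hρ hσ _ _ h => exists_uniform_unitary_mixture_of_pmaj hd0 hρ hσ.isHermitian h,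
    fun m hm => ?_⟩
  have hdC : (d : ℂ) ≠ 0 := by exact_mod_cast hd0
  let i₀ : Fin d := ⟨0, by omega⟩
  have hρ : (diagonal (Pi.single i₀ 1) : Matrix (Fin d) (Fin d) ℂ).PosSemidef :=
    PosSemidef.diagonal (Pi.single_nonneg.2 zero_le_one)
  have hσ : ((d : ℂ)⁻¹ • (1 : Matrix (Fin d) (Fin d) ℂ)).PosSemidef :=
    PosSemidef.one.smul (inv_nonneg.2 (Nat.cast_nonneg d))
  have htρ : (diagonal (Pi.single i₀ 1) : Matrix (Fin d) (Fin d) ℂ).trace = 1 := by simp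
  have htσ : ((d : ℂ)⁻¹ • (1 : Matrix (Fin d) (Fin d) ℂ)).trace = 1 := by simp [hdC]
  have hmem : (1 : ℂ) ∈ spectrum ℂ (diagonal (Pi.single i₀ 1) : Matrix (Fin d) (Fin d) ℂ) := by
    rw [spectrum_diagonal]
    exact ⟨i₀, by simp⟩
  rw [hρ.isHermitian.spectrum_eq_image_range] at hmem
  obtain ⟨_, ⟨j, rfl⟩, hj⟩ := hmem
  refine ⟨_, _, hρ, hσ, htρ, htσ, pmaj_of_isProbVec_of_apply_eq_one
    (hσ.isProbVec_eigenvalues htσ) (hρ.isProbVec_eigenvalues htρ) (j := j)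
    (Complex.ofReal_injective (by simpa using hj)), ?_⟩
  rintro ⟨U, -, hU⟩
  have hrank := rank_smul_sum_conj_single_le (m : ℂ)⁻¹ i₀ U
  have hunit : IsUnit ((d : ℂ)⁻¹ • (1 : Matrix (Fin d) (Fin d) ℂ)) :=
    isUnit_one.smul (Units.mk0 _ (inv_ne_zero hdC))
  rw [← hU, rank_of_isUnit _ hunit, Fintype.card_fin] at hrank
  omega
end

section
/- For every integer d ≥ 2 and m = ⌈√d⌉, there exists a unitary matrix U of size dm×dm (acting on ℂ^d⊗ℂ^m, with indices (i,a), i ∈ {1..d}, a ∈ {1..m}) such that for every d×d complex density matrix ρ: Tr_A[U(ρ⊗(1/m)I_m)U†] = Δ(ρ) and Tr_S[U(ρ⊗(1/m)I_m)U†] = (1/m)I_m, where Δ(ρ) is the diagonal part of ρ in the standard basis (Δ(ρ)_{ij} = ρ_{ii}δ_{ij}), ρ⊗τ is the Kronecker product, and the partial traces of a matrix M indexed by pairs are defined entrywise by (Tr_A M)_{ij} = Σ_a M_{(i,a),(j,a)} and (Tr_S M)_{ab} = Σ_i M_{(i,a),(i,b)}. -/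
open scoped ComplexOrder

/-- Partial trace over the ancilla `A` of a matrix on `ℂ^d ⊗ ℂ^m`:
`(Tr_A M)_{ij} = ∑ a, M_{(i,a),(j,a)}`. -/
noncomputable def ptrA {d m : ℕ} (M : Matrix (Fin d × Fin m) (Fin d × Fin m) ℂ) :
    Matrix (Fin d) (Fin d) ℂ :=
  Matrix.of fun i j => ∑ a, M (i, a) (j, a)

/-- Partial trace over the system `S`: `(Tr_S M)_{ab} = ∑ i, M_{(i,a),(i,b)}`. -/
noncomputable def ptrS {d m : ℕ} (M : Matrix (Fin d × Fin m) (Fin d × Fin m) ℂ) :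
    Matrix (Fin m) (Fin m) ℂ :=
  Matrix.of fun a b => ∑ i, M (i, a) (i, b)

open Matrix Kronecker

/-- The Weyl–Heisenberg (clock-and-shift) matrix `X ^ p.1 * Z ^ p.2` on `ℂ^N`. -/
noncomputable def weylMatrix {N : ℕ} [NeZero N] (p : ZMod N × ZMod N) :
    Matrix (ZMod N) (ZMod N) ℂ :=
  Matrix.of fun a b => if b = a - p.1 then ZMod.stdAddChar (b * p.2) else 0

theorem weylMatrix_mul_conjTranspose_apply {N : ℕ} [NeZero N] (p q : ZMod N × ZMod N)
    (a b : ZMod N) :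
    (weylMatrix p * (weylMatrix q)ᴴ) a b =
      if a - p.1 = b - q.1 then ZMod.stdAddChar ((a - p.1) * (p.2 - q.2)) else 0 := by
  simp only [Matrix.mul_apply, weylMatrix, Matrix.of_apply, Matrix.conjTranspose_apply, ite_mul,
    zero_mul, Finset.sum_ite_eq', Finset.mem_univ, if_true]
  split_ifs
  · rw [mul_sub, sub_eq_add_neg (_ * _), AddChar.map_add_eq_mul, AddChar.map_neg_eq_conj]
    rfl
  · simp

theorem weylMatrix_mul_conjTranspose_self {N : ℕ} [NeZero N] (p : ZMod N × ZMod N) :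
    weylMatrix p * (weylMatrix p)ᴴ = 1 := by
  ext a b
  simp [weylMatrix_mul_conjTranspose_apply, Matrix.one_apply]

theorem trace_weylMatrix_mul_conjTranspose {N : ℕ} [NeZero N] (p q : ZMod N × ZMod N) :
    (weylMatrix p * (weylMatrix q)ᴴ).trace = if p = q then (N : ℂ) else 0 := by
  simp only [Matrix.trace, Matrix.diag_apply, weylMatrix_mul_conjTranspose_apply, sub_right_inj]
  by_cases h : p.1 = q.1
  · simp only [h, if_true]
    have hshift := (Equiv.subRight q.1).sum_comp
      fun x : ZMod N => (ZMod.stdAddChar (x * (p.2 - q.2)) : ℂ)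
    simp only [Equiv.subRight_apply] at hshift
    rw [hshift, AddChar.sum_mulShift _ (ZMod.isPrimitive_stdAddChar N)]
    simp [Prod.ext_iff, h, sub_eq_zero]
  · simp [Prod.ext_iff, h]

/-- The block-diagonal matrix `∑ i, |i⟩⟨i| ⊗ V i`, applying `V i` controlled on `i`. -/
def controlledMatrix {d m : ℕ} (V : Fin d → Matrix (Fin m) (Fin m) ℂ) :
    Matrix (Fin d × Fin m) (Fin d × Fin m) ℂ :=
  Matrix.of fun p q => if p.1 = q.1 then V p.1 p.2 q.2 else 0

theorem controlledMatrix_conj_kronecker_smul_one_apply {d m : ℕ}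
    (V : Fin d → Matrix (Fin m) (Fin m) ℂ) (ρ : Matrix (Fin d) (Fin d) ℂ) (c : ℂ)
    (i j : Fin d) (a b : Fin m) :
    (controlledMatrix V * (ρ ⊗ₖ (c • (1 : Matrix (Fin m) (Fin m) ℂ))) *
      (controlledMatrix V)ᴴ) (i, a) (j, b) = c * ρ i j * (V i * (V j)ᴴ) a b := by
  simp only [Matrix.mul_apply, controlledMatrix, Matrix.of_apply, Matrix.conjTranspose_apply,
    Fintype.sum_prod_type, Matrix.kroneckerMap_apply, Matrix.smul_apply, Matrix.one_apply,
    smul_eq_mul, mul_ite, ite_mul, zero_mul, mul_zero, mul_one, apply_ite star, star_zero,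
    Finset.sum_ite_eq, Finset.sum_ite_eq', Finset.sum_ite_irrel, Finset.sum_const_zero,
    Finset.mem_univ, if_true, Finset.mul_sum]
  exact Finset.sum_congr rfl fun x _ => by ring

theorem controlledMatrix_mem_unitaryGroup {d m : ℕ} {V : Fin d → Matrix (Fin m) (Fin m) ℂ}
    (hV : ∀ i, V i * (V i)ᴴ = 1) :
    controlledMatrix V ∈ Matrix.unitaryGroup (Fin d × Fin m) ℂ := by
  rw [Matrix.mem_unitaryGroup_iff, Matrix.star_eq_conjTranspose]
  ext ⟨i, a⟩ ⟨j, b⟩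
  have h := controlledMatrix_conj_kronecker_smul_one_apply V 1 1 i j a b
  rw [one_smul, Matrix.one_kronecker_one, mul_one, one_mul] at h
  rw [h]
  by_cases hij : i = j
  · subst hij
    simp [hV, Matrix.one_apply]
  · simp [hij]

theorem ptrA_controlledMatrix_conj {d m : ℕ} (hm : m ≠ 0)
    {V : Fin d → Matrix (Fin m) (Fin m) ℂ}
    (hV : ∀ i j, (V i * (V j)ᴴ).trace = if i = j then (m : ℂ) else 0)
    (ρ : Matrix (Fin d) (Fin d) ℂ) :
    ptrA (controlledMatrix V * (ρ ⊗ₖ ((m : ℂ)⁻¹ • (1 : Matrix (Fin m) (Fin m) ℂ))) *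
      (controlledMatrix V)ᴴ) = Matrix.diagonal fun i => ρ i i := by
  ext i j
  have h := hV i j
  simp only [Matrix.trace, Matrix.diag_apply] at h
  simp only [ptrA, Matrix.of_apply, controlledMatrix_conj_kronecker_smul_one_apply,
    ← Finset.mul_sum, h, Matrix.diagonal_apply]
  split_ifs with hij
  · subst hij
    field_simp
  · simp

theorem ptrS_controlledMatrix_conj {d m : ℕ} {V : Fin d → Matrix (Fin m) (Fin m) ℂ}
    (hV : ∀ i, V i * (V i)ᴴ = 1) {ρ : Matrix (Fin d) (Fin d) ℂ} (hρ : ρ.trace = 1) (c : ℂ) :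
    ptrS (controlledMatrix V * (ρ ⊗ₖ (c • (1 : Matrix (Fin m) (Fin m) ℂ))) *
      (controlledMatrix V)ᴴ) = c • (1 : Matrix (Fin m) (Fin m) ℂ) := by
  ext a b
  simp only [Matrix.trace, Matrix.diag_apply] at hρ
  simp only [ptrS, Matrix.of_apply, controlledMatrix_conj_kronecker_smul_one_apply, hV,
    ← Finset.sum_mul, ← Finset.mul_sum, hρ, mul_one, Matrix.smul_apply, smul_eq_mul]

/-- There are `m ^ 2` pairwise trace-orthogonal unitaries of size `m`. -/
theorem exists_orthogonal_unitaries {d m : ℕ} (hm : m ≠ 0) (hdm : d ≤ m ^ 2) :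
    ∃ V : Fin d → Matrix (Fin m) (Fin m) ℂ, (∀ i, V i * (V i)ᴴ = 1) ∧
      ∀ i j, (V i * (V j)ᴴ).trace = if i = j then (m : ℂ) else 0 := by
  have : NeZero m := ⟨hm⟩
  obtain ⟨f⟩ : Nonempty (Fin d ↪ ZMod m × ZMod m) :=
    Function.Embedding.nonempty_of_card_le (by simpa [ZMod.card, sq] using hdm)
  let e : Fin m ≃ ZMod m := (ZMod.finEquiv m).toEquiv
  refine ⟨fun i => (weylMatrix (f i)).submatrix e e, fun i => ?_, fun i j => ?_⟩
  · rw [Matrix.conjTranspose_submatrix, Matrix.submatrix_mul_equiv,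
      weylMatrix_mul_conjTranspose_self, Matrix.submatrix_one_equiv]
  · rw [Matrix.conjTranspose_submatrix, Matrix.submatrix_mul_equiv]
    have h := trace_weylMatrix_mul_conjTranspose (f i) (f j)
    simp only [f.injective.eq_iff] at h
    rw [← h]
    exact e.sum_comp fun x => (weylMatrix (f i) * (weylMatrix (f j))ᴴ) x x

/-- Boes–Eisert–Gallego–Müller–Wilming catalytic dephasing: for `m = ⌈√d⌉` there is a
unitary on `ℂ^d ⊗ ℂ^m` that, together with a maximally mixed ancilla of dimension `m`,
implements the completely dephasing map on every `d`-dimensional state while returning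
the ancilla exactly in its initial maximally mixed state. -/
theorem catalytic_dephasing (d : ℕ) (hd : 2 ≤ d) (m : ℕ) (hm : m = ⌈Real.sqrt d⌉₊) :
    ∃ U ∈ Matrix.unitaryGroup (Fin d × Fin m) ℂ,
      ∀ ρ : Matrix (Fin d) (Fin d) ℂ, ρ.PosSemidef → ρ.trace = 1 →
        ptrA (U * Matrix.kroneckerMap (· * ·) ρ
              (((m : ℂ))⁻¹ • (1 : Matrix (Fin m) (Fin m) ℂ)) * U.conjTranspose) =
            Matrix.diagonal (fun i => ρ i i) ∧
        ptrS (U * Matrix.kroneckerMap (· * ·) ρ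
              (((m : ℂ))⁻¹ • (1 : Matrix (Fin m) (Fin m) ℂ)) * U.conjTranspose) =
            ((m : ℂ))⁻¹ • (1 : Matrix (Fin m) (Fin m) ℂ) := by
  have hdm : d ≤ m ^ 2 := by
    have h : Real.sqrt d ≤ m := hm ▸ Nat.le_ceil _
    exact_mod_cast (Real.sqrt_le_left (Nat.cast_nonneg m)).mp h
  have hm0 : m ≠ 0 := by
    rintro rfl
    omega
  obtain ⟨V, hV, hVtr⟩ := exists_orthogonal_unitaries hm0 hdm
  exact ⟨controlledMatrix V, controlledMatrix_mem_unitaryGroup hV, fun ρ _ hρ =>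
    ⟨ptrA_controlledMatrix_conj hm0 hVtr ρ, ptrS_controlledMatrix_conj hV hρ _⟩⟩
end
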